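/- If the random projection vector v ∈ ℝ^D satisfies E_{p_v}[v v^⊤] = I_D and the relevant expectations are finite, then for every θ the sliced score matching objective equals the exact score matching objective: E_{p_v} E_{p_d}[ v^⊤ ∇_x s_m(x;θ) v + ½ (v^⊤ s_m(x;θ))² ] = E_{p_d}[ tr(∇_x s_m(x;θ)) + ½ ‖s_m(x;θ)‖² ]. In particular this holds when p_v is the multivariate standard normal N(0, I_D) or the multivariate Rademacher distribution. -/

import Mathlib

open MeasureTheory

noncomputable section

/-- `∂ᵢ log p_m(x;θ)`, the `i`-th partial derivative in `x` of the log-density. -/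
def dLx {D : ℕ} {Θ : Type*} (pm : Θ → (Fin D → ℝ) → ℝ)
    (θ : Θ) (x : Fin D → ℝ) (i : Fin D) : ℝ :=
  fderiv ℝ (fun y => Real.log (pm θ y)) x (Pi.single i 1)

/-- `∂ᵢ∂ⱼ log p_m(x;θ)`, a second partial derivative in `x` of the log-density. -/
def d2Lx {D : ℕ} {Θ : Type*} (pm : Θ → (Fin D → ℝ) → ℝ)
    (θ : Θ) (x : Fin D → ℝ) (i j : Fin D) : ℝ :=
  fderiv ℝ (fun y => dLx pm θ y j) x (Pi.single i 1)

theorem aux_gauss (D : ℕ) (i j : Fin D) :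
    (∫ v : Fin D → ℝ, v i * v j
            ∂(Measure.pi fun _ : Fin D => ProbabilityTheory.gaussianReal 0 1))
          = if i = j then (1 : ℝ) else 0 := by
  have hm : ∀ k : Fin D, ∫ v : Fin D → ℝ, v k
      ∂(Measure.pi fun _ : Fin D => ProbabilityTheory.gaussianReal 0 1) = 0 := by
    intro k
    have := integral_comp_eval (μ := fun _ : Fin D => ProbabilityTheory.gaussianReal 0 1)
      (i := k) (f := fun x : ℝ => x) aestronglyMeasurable_id
    rw [this, ProbabilityTheory.integral_id_gaussianReal]
  split_ifs with h
  · subst h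
    have := integral_comp_eval (μ := fun _ : Fin D => ProbabilityTheory.gaussianReal 0 1)
      (i := i) (f := fun x : ℝ => x * x) (by fun_prop)
    rw [this]
    have h2 := ProbabilityTheory.variance_fun_id_gaussianReal (μ := 0) (v := 1)
    rw [ProbabilityTheory.variance_eq_integral (by fun_prop)] at h2
    simp only [ProbabilityTheory.integral_id_gaussianReal, sub_zero] at h2
    simpa [pow_two] using h2
  · have hI := ProbabilityTheory.iIndepFun_pi
      (μ := fun _ : Fin D => ProbabilityTheory.gaussianReal 0 1)
      (X := fun _ (x : ℝ) => x) (fun _ => by fun_prop)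
    have h2 := (hI.indepFun h).integral_fun_mul_eq_mul_integral
      (measurable_pi_apply i).aestronglyMeasurable (measurable_pi_apply j).aestronglyMeasurable
    rw [h2, hm i, zero_mul]

theorem aux_rad (D : ℕ) (i j : Fin D) :
    (∫ v : Fin D → ℝ, v i * v j
            ∂(Measure.map (fun s : Fin D → Bool => fun i => if s i then (1 : ℝ) else -1)
              (PMF.uniformOfFintype (Fin D → Bool)).toMeasure))
          = if i = j then (1 : ℝ) else 0 := by
  rw [integral_map (by exact (measurable_of_finite _).aemeasurable) (by fun_prop)]
  split_ifs with h
  · subst h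
    have : ∀ s : Fin D → Bool, (if s i then (1 : ℝ) else -1) * (if s i then (1 : ℝ) else -1) = 1 := by
      intro s; split_ifs <;> norm_num
    simp only [this]
    simp
  · rw [PMF.integral_eq_sum]
    refine Finset.sum_involution (fun s _ => Function.update s i (!s i)) ?_ ?_ ?_ ?_
    · intro s _
      have hj : j ≠ i := fun e => h e.symm
      simp only [Function.update_self, Function.update_of_ne hj, PMF.uniformOfFintype_apply]
      cases s i <;> cases s j <;> simp
    · intro s _ _ e
      have := congrFun e i
      simp at this
    · intro s _; simp
    · intro s _; simp

theorem aux_dL {D : ℕ} {Θ : Type*} (pm : Θ → (Fin D → ℝ) → ℝ) (θ : Θ)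
    (hpos : ∀ x, 0 < pm θ x) (hs : ContDiff ℝ 2 (pm θ)) (i : Fin D) :
    Continuous (fun x => dLx pm θ x i) := by
  have h : ContDiff ℝ 2 (fun y => Real.log (pm θ y)) := hs.log (fun x => (hpos x).ne')
  have := h.continuous_fderiv (by norm_num)
  unfold dLx
  exact this.clm_apply continuous_const

theorem aux_vv {D : ℕ} (μv : Measure (Fin D → ℝ))
    (hv2 : Integrable (fun v => ∑ i, (v i) ^ 2) μv) (i j : Fin D) :
    Integrable (fun v => v i * v j) μv := by
  refine hv2.mono' (by fun_prop) (ae_of_all _ fun v => ?_)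
  have h1 := Finset.single_le_sum (f := fun i => (v i)^2) (fun k _ => sq_nonneg (v k)) (Finset.mem_univ i)
  have h2 := Finset.single_le_sum (f := fun i => (v i)^2) (fun k _ => sq_nonneg (v k)) (Finset.mem_univ j)
  rw [Real.norm_eq_abs, abs_le]
  constructor <;> nlinarith [sq_nonneg (v i + v j), sq_nonneg (v i - v j)]

/-- **Hutchinson's trick for score matching.** If `E_{p_v}[v vᵀ] = I_D` and the relevant
expectations are finite, the sliced score matching objective equals the exact score
matching objective; in particular the moment condition holds for the multivariate
standard normal `N(0, I_D)` and the multivariate Rademacher distribution. -/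
theorem sliced_equals_exact_score_matching_of_isotropic
    (D : ℕ) (hD : 1 ≤ D) (Θ : Type*)
    (pd : (Fin D → ℝ) → ℝ) (pm : Θ → (Fin D → ℝ) → ℝ)
    (μv : Measure (Fin D → ℝ)) [IsProbabilityMeasure μv]
    -- data density: positive, differentiable, integrates to one
    (hpd_pos : ∀ x, 0 < pd x) (hpd_diff : Differentiable ℝ pd)
    (hpd_prob : ∫ x, pd x = 1)
    -- model densities: positive, twice continuously differentiable
    (hpm_pos : ∀ θ x, 0 < pm θ x) (hpm_smooth : ∀ θ, ContDiff ℝ 2 (pm θ))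
    -- second moment of projection vectors: E[‖v‖²] < ∞
    (hv2 : Integrable (fun v => ∑ i, (v i) ^ 2) μv)
    -- isotropy: E[v vᵀ] = I_D
    (hvvt : ∀ i j, (∫ v, v i * v j ∂μv) = if i = j then (1 : ℝ) else 0)
    -- the relevant expectations are finite
    (hs_int : ∀ θ, Integrable (fun x => pd x * ∑ i, (dLx pm θ x i) ^ 2))
    (hH_int : ∀ θ, Integrable (fun z : (Fin D → ℝ) × (Fin D → ℝ) =>
      pd z.2 * (∑ i, ∑ j, z.1 i * z.1 j * d2Lx pm θ z.2 i j)) (μv.prod volume)) :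
    -- the sliced objective equals the exact score matching objective
    (∀ θ : Θ,
      (∫ v, (∫ x, pd x * ((∑ i, ∑ j, v i * v j * d2Lx pm θ x i j)
          + (1/2) * (∑ i, v i * dLx pm θ x i) ^ 2)) ∂μv)
        = ∫ x, pd x * ((∑ i, d2Lx pm θ x i i) + (1/2) * ∑ i, (dLx pm θ x i) ^ 2))
    -- in particular, the standard normal satisfies E[v vᵀ] = I_D
    ∧ (∀ i j : Fin D,
        (∫ v : Fin D → ℝ, v i * v j
            ∂(Measure.pi fun _ : Fin D => ProbabilityTheory.gaussianReal 0 1))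
          = if i = j then (1 : ℝ) else 0)
    -- and so does the multivariate Rademacher distribution (uniform on {±1}^D)
    ∧ (∀ i j : Fin D,
        (∫ v : Fin D → ℝ, v i * v j
            ∂(Measure.map (fun s : Fin D → Bool => fun i => if s i then (1 : ℝ) else -1)
              (PMF.uniformOfFintype (Fin D → Bool)).toMeasure))
          = if i = j then (1 : ℝ) else 0) := by
  refine ⟨fun θ => ?_, aux_gauss D, aux_rad D⟩
  have hc : ∀ i, Continuous (fun x => dLx pm θ x i) :=
    aux_dL pm θ (hpm_pos θ) (hpm_smooth θ)
  have hpdc : Continuous pd := hpd_diff.continuous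
  have hS : Integrable (fun z : (Fin D → ℝ) × (Fin D → ℝ) =>
      pd z.2 * ((1/2) * (∑ i, z.1 i * dLx pm θ z.2 i) ^ 2)) (μv.prod volume) := by
    refine (hv2.mul_prod (hs_int θ)).mono' ?_ (ae_of_all _ fun z => ?_)
    · have : ∀ i, Continuous (fun z : (Fin D → ℝ) × (Fin D → ℝ) => dLx pm θ z.2 i) :=
        fun i => (hc i).comp continuous_snd
      apply Continuous.aestronglyMeasurable
      fun_prop
    · have hp := hpd_pos z.2
      have hcs := Finset.sum_mul_sq_le_sq_mul_sq Finset.univ (fun i => z.1 i)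
        (fun i => dLx pm θ z.2 i)
      rw [Real.norm_of_nonneg (by positivity)]
      have h0 := sq_nonneg (∑ i, z.1 i * dLx pm θ z.2 i)
      calc _ ≤ pd z.2 * ((∑ i, z.1 i ^ 2) * ∑ i, dLx pm θ z.2 i ^ 2) := by
            refine mul_le_mul_of_nonneg_left ?_ hp.le
            linarith
        _ = _ := by ring
  have hT := (hH_int θ).add hS
  have hF : Integrable (Function.uncurry fun (v x : Fin D → ℝ) =>
      pd x * ((∑ i, ∑ j, v i * v j * d2Lx pm θ x i j)
          + (1/2) * (∑ i, v i * dLx pm θ x i) ^ 2)) (μv.prod volume) := by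
    refine hT.congr (ae_of_all _ fun z => ?_)
    simp [Function.uncurry, mul_add]
  rw [integral_integral_swap hF]
  congr 1
  ext x
  rw [integral_const_mul]
  congr 1
  have hvv := aux_vv μv hv2
  have key : ∀ a : Fin D → Fin D → ℝ,
      Integrable (fun v => ∑ i, ∑ j, v i * v j * a i j) μv ∧
      ∫ v, ∑ i, ∑ j, v i * v j * a i j ∂μv = ∑ i, a i i := by
    intro a
    have hi : ∀ i j, Integrable (fun v => v i * v j * a i j) μv :=
      fun i j => (hvv i j).mul_const _
    refine ⟨integrable_finsetSum _ fun i _ => integrable_finsetSum _ fun j _ => hi i j, ?_⟩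
    rw [integral_finsetSum _ fun i _ => integrable_finsetSum _ fun j _ => hi i j]
    refine Finset.sum_congr rfl fun i _ => ?_
    rw [integral_finsetSum _ fun j _ => hi i j]
    simp [integral_mul_const, hvvt]
  have hsq : ∀ v : Fin D → ℝ, (∑ i, v i * dLx pm θ x i) ^ 2
      = ∑ i, ∑ j, v i * v j * (dLx pm θ x i * dLx pm θ x j) := by
    intro v
    rw [pow_two, Finset.sum_mul_sum]
    refine Finset.sum_congr rfl fun i _ => Finset.sum_congr rfl fun j _ => by ring
  simp only [hsq]
  rw [integral_add (key _).1 ((key _).1.const_mul _), integral_const_mul, (key _).2, (key _).2]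
  simp only [pow_two]
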